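/- Fixed momentum accelerated proximal gradient: let 0 < μ < L (f L-Lipschitz smooth and μ-strongly convex), q := μ/L, fix r ∈ (√q, √(q^{-1})), set α := r√q and θ := (1 − r^{-1}√q)(1 − r√q)/(1 − q). Run: y_1 = x_1, and for k ≥ 1: x_{k+1} := y_k − L^{-1} G_L(y_k), y_{k+1} := x_{k+1} + θ(x_{k+1} − x_k). Then for any minimizer x* of F and all k ≥ 1: F(x_{k+1}) − F(x*) ≤ (1 − min(μ/(αL), α))^k (F(x_1) − F(x*) + (L/2)‖x_1 − x*‖²); in particular the optimality gap converges linearly at rate O((1 − min(μ/(αL), α))^k). -/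

import Mathlib

open RealInnerProductSpace

/-!
Write `τ = (α - q) / (1 - q)`. The extrapolated point satisfies `y k = x k + τ (v k - x k)` for the
auxiliary sequence `v 1 = x 1`, `v (k+1) = x k + α⁻¹ (x (k+1) - x k)`; this is exactly what the
choice of `θ` achieves. The proximal step inequality
`F (T y) + L/2 ‖z - T y‖² ≤ F z + (L - μ)/2 ‖z - y‖²`
(descent lemma, strong convexity of `f` and of the proximal subproblem), averaged over `z = x k`
with weight `1 - α` and `z = x*` with weight `α`, leaves a quadratic form in `x k`, `v k`, which
convexity of the squared norm bounds by `(α² L / 2)(1 - q/α) ‖v k - x*‖²`. Thus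
`F (x k) - F x* + (L α² / 2) ‖v k - x*‖²` contracts by the factor
`max (1 - α) (1 - q/α) = 1 - min (q/α) α` at each step, and `α < 1` bounds its initial value.
-/

section Aux

variable {E : Type*} [NormedAddCommGroup E] [InnerProductSpace ℝ E]

/-- Descent lemma: a function with `L`-Lipschitz gradient lies below its quadratic upper models. -/
lemma descent_lemma [CompleteSpace E] {L : ℝ} {f : E → ℝ} {f' : E → E}
    (hgrad : ∀ x, HasGradientAt f (f' x) x)
    (hlip : ∀ x y, ‖f' x - f' y‖ ≤ L * ‖x - y‖) (x y : E) :
    f x ≤ f y + ⟪f' y, x - y⟫ + L / 2 * ‖x - y‖ ^ 2 := by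
  set d := x - y with hd
  -- The gap between `f` and its upper model along the segment is nonincreasing.
  have hder : ∀ t : ℝ, HasDerivAt
      (fun t : ℝ => f (y + t • d) - t * ⟪f' y, d⟫ - L / 2 * ‖d‖ ^ 2 * t ^ 2)
      (⟪f' (y + t • d), d⟫ - ⟪f' y, d⟫ - L * ‖d‖ ^ 2 * t) t := by
    intro t
    have hline : HasDerivAt (fun t : ℝ => y + t • d) d t := by
      simpa using ((hasDerivAt_id t).smul_const d).const_add y
    have h1 := (hgrad (y + t • d)).hasFDerivAt.comp_hasDerivAt t hline
    have h2 := (hasDerivAt_id t).mul_const ⟪f' y, d⟫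
    have h3 := ((hasDerivAt_id t).pow 2).const_mul (L / 2 * ‖d‖ ^ 2)
    refine ((h1.sub h2).sub h3).congr_deriv ?_
    simp
    ring
  have hanti := antitoneOn_of_deriv_nonpos (convex_Icc (0 : ℝ) 1)
    (fun t _ => (hder t).continuousAt.continuousWithinAt)
    (fun t _ => (hder t).differentiableAt.differentiableWithinAt)
    (fun t ht => by
      rw [interior_Icc] at ht
      rw [(hder t).deriv, ← inner_sub_left]
      have h1 := real_inner_le_norm (f' (y + t • d) - f' y) d
      have h2 := hlip (y + t • d) y
      rw [add_sub_cancel_left, norm_smul, Real.norm_of_nonneg ht.1.le] at h2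
      nlinarith [mul_le_mul_of_nonneg_right h2 (norm_nonneg d)])
  have h := hanti (Set.left_mem_Icc.2 zero_le_one) (Set.right_mem_Icc.2 zero_le_one) zero_le_one
  simp only [one_smul, zero_smul, add_zero] at h
  have hxy : y + d = x := by rw [hd]; abel
  rw [hxy] at h
  linarith

lemma norm_sq_convex_comb (a b : E) (t : ℝ) :
    ‖(1 - t) • a + t • b‖ ^ 2
      = (1 - t) * ‖a‖ ^ 2 + t * ‖b‖ ^ 2 - t * (1 - t) * ‖b - a‖ ^ 2 := by
  rw [norm_add_sq_real, norm_sub_sq_real, norm_smul, norm_smul, inner_smul_left, inner_smul_right,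
    mul_pow, mul_pow, Real.norm_eq_abs, Real.norm_eq_abs, sq_abs, sq_abs, real_inner_comm a b]
  simp
  ring

/-- The proximal subproblem at `y` with linear term `p` has quadratic growth `L / 2` at its
minimizer `u`. -/
lemma prox_growth {L : ℝ} {g : E → EReal}
    (hg_conv : ∀ x y : E, ∀ a b : ℝ, 0 ≤ a → 0 ≤ b → a + b = 1 →
      g (a • x + b • y) ≤ (a : EReal) * g x + (b : EReal) * g y)
    {p y u z : E} {gu gz : ℝ} (hgu : g u = gu) (hgz : g z = gz)
    (hu : ∀ x, g u + ((⟪p, u⟫ + L / 2 * ‖u - y‖ ^ 2 : ℝ) : EReal)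
        ≤ g x + ((⟪p, x⟫ + L / 2 * ‖x - y‖ ^ 2 : ℝ) : EReal)) :
    gu + ⟪p, u⟫ + L / 2 * ‖u - y‖ ^ 2 + L / 2 * ‖z - u‖ ^ 2
      ≤ gz + ⟪p, z⟫ + L / 2 * ‖z - y‖ ^ 2 := by
  -- Compare `u` with `(1 - t) u + t z`, divide by `t`, and let `t → 0`.
  have key : ∀ t ∈ Set.Ioo (0 : ℝ) 1,
      gu + ⟪p, u⟫ + L / 2 * ‖u - y‖ ^ 2 + (1 - t) * (L / 2 * ‖z - u‖ ^ 2)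
        ≤ gz + ⟪p, z⟫ + L / 2 * ‖z - y‖ ^ 2 := by
    intro t ht
    have h1 := hu ((1 - t) • u + t • z)
    have h2 := hg_conv u z (1 - t) t (by linarith [ht.2]) ht.1.le (by ring)
    have h3 := h1.trans (add_le_add_left h2 _)
    rw [hgu, hgz] at h3
    norm_cast at h3
    have e1 : (1 - t) • u + t • z - y = (1 - t) • (u - y) + t • (z - y) := by module
    have e2 : z - y - (u - y) = z - u := by abel
    rw [e1, norm_sq_convex_comb, e2, inner_add_right, inner_smul_right, inner_smul_right] at h3
    have h4 : t * (gu + ⟪p, u⟫ + L / 2 * ‖u - y‖ ^ 2 + (1 - t) * (L / 2 * ‖z - u‖ ^ 2))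
        ≤ t * (gz + ⟪p, z⟫ + L / 2 * ‖z - y‖ ^ 2) := by linarith
    exact le_of_mul_le_mul_left h4 ht.1
  have hcont : Filter.Tendsto
      (fun t : ℝ => gu + ⟪p, u⟫ + L / 2 * ‖u - y‖ ^ 2 + (1 - t) * (L / 2 * ‖z - u‖ ^ 2))
      (nhdsWithin 0 (Set.Ioi 0))
      (nhds (gu + ⟪p, u⟫ + L / 2 * ‖u - y‖ ^ 2 + (1 - 0) * (L / 2 * ‖z - u‖ ^ 2))) :=
    (Continuous.tendsto (by fun_prop) 0).mono_left nhdsWithin_le_nhds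
  have h := le_of_tendsto hcont
    (Filter.eventually_of_mem (Ioo_mem_nhdsGT zero_lt_one) key)
  linarith

/-- Contraction of the Lyapunov function in one step, from the proximal step inequality at the
current iterate `x` and at the minimizer `s`; here `u` is the new iterate and `Fx`, `Fs`, `Fu` are
the objective values. -/
lemma lyapunov_step {L q α ρ Fx Fs Fu : ℝ} (hL : 0 < L) (hq : 0 < q)
    (hqα : q < α) (hα1 : α < 1) (hρ1 : ρ ≤ α) (hρ2 : ρ ≤ q / α) (hFs : Fs ≤ Fx)
    {x y v u s : E} (hy : y = x + ((α - q) / (1 - q)) • (v - x))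
    (h1 : Fu + L / 2 * ‖x - u‖ ^ 2 ≤ Fx + (L - q * L) / 2 * ‖x - y‖ ^ 2)
    (h2 : Fu + L / 2 * ‖s - u‖ ^ 2 ≤ Fs + (L - q * L) / 2 * ‖s - y‖ ^ 2) :
    Fu - Fs + L * α ^ 2 / 2 * ‖x + α⁻¹ • (u - x) - s‖ ^ 2
      ≤ (1 - ρ) * (Fx - Fs + L * α ^ 2 / 2 * ‖v - s‖ ^ 2) := by
  have hα : 0 < α := hq.trans hqα
  have hq1' : (1 - q) ≠ 0 := by linarith
  have hnew : α ^ 2 * ‖x + α⁻¹ • (u - x) - s‖ ^ 2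
      = (1 - α) * ‖x - u‖ ^ 2 + α * ‖s - u‖ ^ 2 - α * (1 - α) * ‖s - x‖ ^ 2 := by
    have e : (1 - α) • (x - u) + α • (s - u) = (-α) • (x + α⁻¹ • (u - x) - s) := by
      match_scalars <;> field_simp <;> ring
    have h := norm_sq_convex_comb (x - u) (s - u) α
    rw [e, norm_smul, mul_pow, Real.norm_eq_abs, sq_abs] at h
    have e2 : s - u - (x - u) = s - x := by abel
    rw [e2] at h
    linarith
  -- `y - ((1 - α) x + α s)` is a multiple of a convex combination of `v - s` and `y - s`.
  have hold : (1 - α) * ‖x - y‖ ^ 2 + α * ‖s - y‖ ^ 2 - α * (1 - α) * ‖s - x‖ ^ 2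
      ≤ α ^ 2 * ((1 - q / α) * ‖v - s‖ ^ 2 + q / α * ‖s - y‖ ^ 2) := by
    have e : (1 - α) • (x - y) + α • (s - y)
        = (-α) • ((1 - q / α) • (v - s) + (q / α) • (y - s)) := by
      rw [hy]
      match_scalars <;> field_simp <;> ring
    have h := norm_sq_convex_comb (x - y) (s - y) α
    rw [e, norm_smul, mul_pow, Real.norm_eq_abs, sq_abs, norm_sq_convex_comb] at h
    have e2 : s - y - (x - y) = s - x := by abel
    rw [e2, norm_sub_rev y s] at h
    have hqa : 0 < q / α := div_pos hq hα
    have hqa1 : 0 < 1 - q / α := sub_pos.2 ((div_lt_one hα).2 hqα)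
    have : 0 ≤ α ^ 2 * (q / α * (1 - q / α) * ‖y - s - (v - s)‖ ^ 2) := by positivity
    linarith
  have hqα' : α ^ 2 * (q / α * ‖s - y‖ ^ 2) = α * q * ‖s - y‖ ^ 2 := by field_simp
  have havg : Fu - Fs + L / 2 * (α ^ 2 * ‖x + α⁻¹ • (u - x) - s‖ ^ 2)
      ≤ (1 - α) * (Fx - Fs) + L / 2 * (α ^ 2 * ((1 - q / α) * ‖v - s‖ ^ 2)) := by
    have k1 := mul_le_mul_of_nonneg_left h1 (sub_nonneg.2 hα1.le)
    have k2 := mul_le_mul_of_nonneg_left h2 hα.le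
    have k3 := mul_le_mul_of_nonneg_left hold (half_pos hL).le
    have k4 : 0 ≤ L * q * (1 - α) * ‖x - y‖ ^ 2 := by
      have := sub_pos.2 hα1
      positivity
    rw [hnew]
    rw [mul_add, hqα'] at k3
    linarith
  have m1 := mul_le_mul_of_nonneg_right hρ1 (sub_nonneg.2 hFs)
  have m2 := mul_le_mul_of_nonneg_right hρ2
    (show 0 ≤ L / 2 * (α ^ 2 * ‖v - s‖ ^ 2) by positivity)
  linarith

end Aux

/-- fixed momentum accelerated proximal gradient.
Let `0 < μ < L` (`f` `L`-Lipschitz smooth and `μ`-strongly convex), `q := μ/L`, fix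
`r ∈ (√q, √(q⁻¹))`, set `α := r√q` and `θ := (1 − r⁻¹√q)(1 − r√q)/(1 − q)`.
Run: `y₁ = x₁`, and for `k ≥ 1`: `x_{k+1} := y_k − L⁻¹G_L(y_k)`,
`y_{k+1} := x_{k+1} + θ(x_{k+1} − x_k)`.
Then for any minimizer `x*` of `F = f + g` and all `k ≥ 1`:
`F(x_{k+1}) − F(x*) ≤ (1 − min(μ/(αL), α))^k (F(x₁) − F(x*) + (L/2)‖x₁ − x*‖²)`. -/
theorem stmt19 {n : ℕ} (L μ : ℝ) (hμ : 0 < μ) (hμL : μ < L)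
    (f : EuclideanSpace ℝ (Fin n) → ℝ)
    (f' : EuclideanSpace ℝ (Fin n) → EuclideanSpace ℝ (Fin n))
    (hgrad : ∀ x, HasGradientAt f (f' x) x)
    (hlip : ∀ x y, ‖f' x - f' y‖ ≤ L * ‖x - y‖)
    (hsc : ∀ x y, f y + ⟪f' y, x - y⟫ + μ / 2 * ‖x - y‖ ^ 2 ≤ f x)
    (g : EuclideanSpace ℝ (Fin n) → EReal)
    (hg_bot : ∀ x, g x ≠ ⊥) (hg_proper : ∃ x, g x ≠ ⊤)
    (hg_lsc : LowerSemicontinuous g)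
    (hg_conv : ∀ x y : EuclideanSpace ℝ (Fin n), ∀ a b : ℝ,
      0 ≤ a → 0 ≤ b → a + b = 1 →
      g (a • x + b • y) ≤ (a : EReal) * g x + (b : EReal) * g y)
    (T : EuclideanSpace ℝ (Fin n) → EuclideanSpace ℝ (Fin n))
    (hT : ∀ y x, g (T y) + ((⟪f' y, T y⟫ + L / 2 * ‖T y - y‖ ^ 2 : ℝ) : EReal)
        ≤ g x + ((⟪f' y, x⟫ + L / 2 * ‖x - y‖ ^ 2 : ℝ) : EReal))
    (q r α θ : ℝ)
    (hq : q = μ / L)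
    (hr : r ∈ Set.Ioo (Real.sqrt q) (Real.sqrt q⁻¹))
    (hα : α = r * Real.sqrt q)
    (hθ : θ = (1 - r⁻¹ * Real.sqrt q) * (1 - r * Real.sqrt q) / (1 - q))
    (x y : ℕ → EuclideanSpace ℝ (Fin n))
    (hinit : y 1 = x 1)
    (hx : ∀ k, 1 ≤ k → x (k + 1) = y k - L⁻¹ • (L • (y k - T (y k))))
    (hy : ∀ k, 1 ≤ k → y (k + 1) = x (k + 1) + θ • (x (k + 1) - x k))
    (xstar : EuclideanSpace ℝ (Fin n))
    (hmin : ∀ z, (f xstar : EReal) + g xstar ≤ (f z : EReal) + g z) :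
    ∀ k : ℕ, 1 ≤ k →
      ((f (x (k + 1)) : EReal) + g (x (k + 1))) - ((f xstar : EReal) + g xstar)
        ≤ (((1 - min (μ / (α * L)) α) ^ k : ℝ) : EReal)
          * (((f (x 1) : EReal) + g (x 1)) - ((f xstar : EReal) + g xstar)
              + ((L / 2 * ‖x 1 - xstar‖ ^ 2 : ℝ) : EReal)) := by
  have hL : 0 < L := hμ.trans hμL
  have hq0 : 0 < q := hq ▸ div_pos hμ hL
  have hq1 : q < 1 := hq ▸ (div_lt_one hL).2 hμL
  have hqL : q * L = μ := by rw [hq]; field_simp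
  have hs0 : 0 < Real.sqrt q := Real.sqrt_pos.2 hq0
  have hss : Real.sqrt q * Real.sqrt q = q := Real.mul_self_sqrt hq0.le
  have hr0 : 0 < r := hs0.trans hr.1
  have hqα : q < α := by
    rw [hα]; nlinarith [mul_lt_mul_of_pos_right hr.1 hs0]
  have hα1 : α < 1 := by
    have h := mul_lt_mul_of_pos_right hr.2 hs0
    rwa [Real.sqrt_inv, inv_mul_cancel₀ hs0.ne', ← hα] at h
  have hα0 : 0 < α := hq0.trans hqα
  have hrq : r⁻¹ * Real.sqrt q = q / α := by
    rw [hα]; field_simp; linarith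
  have hθ' : θ = (1 - q / α) * (1 - α) / (1 - q) := by rw [hθ, hrq, ← hα]
  have hρeq : μ / (α * L) = q / α := by rw [hq]; field_simp
  rw [hρeq]
  set ρ := min (q / α) α with hρ
  have hρ1 : ρ ≤ α := min_le_right _ _
  have hρ2 : ρ ≤ q / α := min_le_left _ _
  have hρ0 : 0 < 1 - ρ := by linarith
  obtain ⟨z₀, hz₀⟩ := hg_proper
  have hs_top : g xstar ≠ ⊤ := by
    intro h
    have h1 := hmin z₀
    lift g z₀ to ℝ using ⟨hz₀, hg_bot z₀⟩ with c
    rw [h, EReal.coe_add_top, top_le_iff] at h1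
    exact EReal.coe_ne_top (f z₀ + c) (by exact_mod_cast h1)
  have hT_top : ∀ y, g (T y) ≠ ⊤ := by
    intro y h
    have h1 := hT y z₀
    lift g z₀ to ℝ using ⟨hz₀, hg_bot z₀⟩ with c
    rw [h, EReal.top_add_coe, top_le_iff] at h1
    exact EReal.coe_ne_top _ (by exact_mod_cast h1)
  have hreal : ∀ z, g z ≠ ⊤ → g z = ((g z).toReal : EReal) := fun z hz =>
    (EReal.coe_toReal hz (hg_bot z)).symm
  have hxT : ∀ k, 1 ≤ k → x (k + 1) = T (y k) := by
    intro k hk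
    rw [hx k hk, inv_smul_smul₀ hL.ne', sub_sub_cancel]
  by_cases hx1 : g (x 1) = ⊤
  · intro k _
    -- The right-hand side is a positive multiple of `⊤`.
    rw [hx1, hreal _ hs_top, EReal.coe_add_top, ← EReal.coe_add, EReal.top_sub_coe,
      EReal.top_add_coe, EReal.coe_mul_top_of_pos (pow_pos hρ0 k)]
    exact le_top
  have hfin : ∀ k, 1 ≤ k → g (x k) ≠ ⊤ := by
    intro k hk
    rcases Nat.exists_eq_add_of_le' hk with ⟨m, rfl⟩
    rcases Nat.eq_zero_or_pos m with rfl | hm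
    · exact hx1
    · rw [hxT m hm]; exact hT_top _
  have hprox : ∀ w z, g z ≠ ⊤ →
      f (T w) + (g (T w)).toReal + L / 2 * ‖z - T w‖ ^ 2
        ≤ f z + (g z).toReal + (L - q * L) / 2 * ‖z - w‖ ^ 2 := by
    intro w z hz
    have h1 := prox_growth hg_conv (hreal _ (hT_top w)) (hreal z hz) (hT w)
    have h2 := descent_lemma hgrad hlip (T w) w
    have h3 := hsc z w
    rw [inner_sub_right] at h2 h3
    rw [hqL]
    linarith
  have hmin' : ∀ z, g z ≠ ⊤ → f xstar + (g xstar).toReal ≤ f z + (g z).toReal := by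
    intro z hz
    have h := hmin z
    rw [hreal z hz, hreal _ hs_top] at h
    exact_mod_cast h
  have main : ∀ k : ℕ, ∃ v, y (k + 1) = x (k + 1) + ((α - q) / (1 - q)) • (v - x (k + 1)) ∧
      (f (x (k + 1)) + (g (x (k + 1))).toReal) - (f xstar + (g xstar).toReal)
          + L * α ^ 2 / 2 * ‖v - xstar‖ ^ 2
        ≤ (1 - ρ) ^ k * ((f (x 1) + (g (x 1)).toReal) - (f xstar + (g xstar).toReal)
          + L / 2 * ‖x 1 - xstar‖ ^ 2) := by
    intro k
    induction k with
    | zero =>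
      refine ⟨x 1, by simp [hinit], ?_⟩
      have hα2 : α ^ 2 ≤ 1 := pow_le_one₀ hα0.le hα1.le
      have := mul_le_mul_of_nonneg_right hα2
        (show 0 ≤ L / 2 * ‖x 1 - xstar‖ ^ 2 by positivity)
      simp only [zero_add, pow_zero]
      linarith
    | succ k ih =>
      obtain ⟨v, hv, hE⟩ := ih
      have hk : 1 ≤ k + 1 := Nat.le_add_left 1 k
      have hxk := hfin (k + 1) hk
      refine ⟨x (k + 1) + α⁻¹ • (x (k + 1 + 1) - x (k + 1)), ?_, ?_⟩
      · rw [hy (k + 1) hk, hθ']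
        have hq1' : (1 - q) ≠ 0 := by linarith
        match_scalars <;> field_simp <;> ring
      · have h1 := hprox (y (k + 1)) (x (k + 1)) hxk
        have h2 := hprox (y (k + 1)) xstar hs_top
        rw [← hxT (k + 1) hk] at h1 h2
        refine (lyapunov_step hL hq0 hqα hα1 hρ1 hρ2 (hmin' _ hxk) hv h1 h2).trans ?_
        rw [pow_succ' (1 - ρ) k, mul_assoc]
        exact mul_le_mul_of_nonneg_left hE hρ0.le
  intro k hk
  obtain ⟨v, -, hE⟩ := main k
  have hpos : 0 ≤ L * α ^ 2 / 2 * ‖v - xstar‖ ^ 2 := by positivity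
  rw [hreal _ (hfin (k + 1) (Nat.le_add_left 1 k)), hreal _ hs_top, hreal _ hx1]
  have hfinal := (le_add_of_nonneg_right hpos).trans hE
  exact_mod_cast hfinal
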